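/- Under Assumption (A): if {h^ε}_{0<ε≤ε₀} ∈ 𝓑_V and h^ε → h pointwise on ℤ as ε → 0⁺, then for each t and each x ∈ ℤ, Λ^ε_t(x,u;h^ε) converges to Λ_t(x,u;h) uniformly in u on every compact subset of U; equivalently, for every x, every sequence ε_n → 0⁺ and every convergent sequence u^{ε_n} → u in U, lim_{n→∞} Λ^{ε_n}_t(x,u^{ε_n};h^{ε_n}) = Λ_t(x,u;h). -/

import Mathlib

open Filter Topology

/-- The setup for a countable-stated (here `ℤ`-stated) risk-sensitive MDP with horizon `T`,
transition kernels `q ε t · x u` (for `0 < ε ≤ eps0`), rate functions `I`, running costs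
`f τ t x u` and terminal costs `g τ x`.  The Lyapunov function `V` is positive and inf-finite. -/
structure RSSetup (U : Type*) [MetricSpace U] where
  T : ℕ
  eps0 : ℝ
  eps0_pos : 0 < eps0
  V : ℤ → ℝ
  V_pos : ∀ x, 0 < V x
  V_infFinite : ∀ K : ℝ, {x : ℤ | V x ≤ K}.Finite
  q : ℝ → ℕ → ℤ → U → ℤ → ℝ
  q_nonneg : ∀ ε ∈ Set.Ioc (0 : ℝ) eps0, ∀ t ∈ Finset.Icc 1 T, ∀ (x : ℤ) (u : U) (z : ℤ),
    0 ≤ q ε t x u z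
  q_pmf : ∀ ε ∈ Set.Ioc (0 : ℝ) eps0, ∀ t ∈ Finset.Icc 1 T, ∀ (x : ℤ) (u : U),
    HasSum (q ε t x u) 1
  I : ℕ → ℤ → U → ℤ → ENNReal
  I_subfin : ∀ (t : ℕ) (x : ℤ) (u : U) (K : ENNReal), K ≠ ⊤ → {z : ℤ | I t x u z ≤ K}.Finite
  f : ℕ → ℕ → ℤ → U → ℝ
  g : ℕ → ℤ → ℝ

namespace RSSetup

variable {U : Type*} [MetricSpace U]

/-- `Λ^ε_t(x,u;h) = ε log ∑_z exp(h(z)/ε) q^ε_t(z;x,u)`. -/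
noncomputable def lamE (S : RSSetup U) (ε : ℝ) (t : ℕ) (x : ℤ) (u : U) (h : ℤ → ℝ) : ℝ :=
  ε * Real.log (∑' z : ℤ, Real.exp (h z / ε) * S.q ε t x u z)

/-- `Λ_t(x,u;h) = sup_z [h(z) - I_t(z;x,u)]` (the supremum being over the points where the
rate function is finite). -/
noncomputable def lam (S : RSSetup U) (t : ℕ) (x : ℤ) (u : U) (h : ℤ → ℝ) : ℝ :=
  sSup ((fun z => h z - (S.I t x u z).toReal) '' {z : ℤ | S.I t x u z ≠ ⊤})

/-- Membership in `B_V`: bounded below and `|h(x)|/V(x) → 0` as `|x| → ∞`. -/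
def memBV (S : RSSetup U) (h : ℤ → ℝ) : Prop :=
  BddBelow (Set.range h) ∧
    Tendsto (fun x : ℤ => |h x| / S.V x) Filter.cofinite (nhds 0)

/-- The pointwise supremum `x ↦ sup_{0<ε≤ε₀} h^ε(x)` of a family. -/
noncomputable def supFam (S : RSSetup U) (h : ℝ → ℤ → ℝ) : ℤ → ℝ :=
  fun x => sSup ((fun ε => h ε x) '' Set.Ioc (0 : ℝ) S.eps0)

/-- Membership of a family `{h^ε}_{0<ε≤ε₀}` in `𝓑_V`: each member is in `B_V`, the family is
uniformly bounded below, and the pointwise supremum `sup_ε h^ε` belongs to `B_V`. -/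
def memFam (S : RSSetup U) (h : ℝ → ℤ → ℝ) : Prop :=
  (∀ ε ∈ Set.Ioc (0 : ℝ) S.eps0, S.memBV (h ε)) ∧
  (∃ c : ℝ, ∀ ε ∈ Set.Ioc (0 : ℝ) S.eps0, ∀ x, c ≤ h ε x) ∧
  (∀ x, BddAbove ((fun ε => h ε x) '' Set.Ioc (0 : ℝ) S.eps0)) ∧
  S.memBV (S.supFam h)

/-- Assumption (A) with parameter `λ₀`. -/
def AssumptionA (S : RSSetup U) (lam0 : ℝ) : Prop :=
  0 < lam0 ∧
  -- (A1): `sup_{0<ε≤ε₀} Λ^ε_t(x,u;λ₀ V) < ∞` (in particular the defining sums converge)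
  (∀ t ∈ Finset.Icc 1 S.T, ∀ (x : ℤ) (u : U),
    (∀ ε ∈ Set.Ioc (0 : ℝ) S.eps0,
      Summable fun z : ℤ => Real.exp (lam0 * S.V z / ε) * S.q ε t x u z) ∧
    ∃ C : ℝ, ∀ ε ∈ Set.Ioc (0 : ℝ) S.eps0, S.lamE ε t x u (fun z => lam0 * S.V z) ≤ C) ∧
  -- (A2): continuity in `u`, and `Λ^ε_t(x,u^ε;h) → Λ_t(x,u;h)` whenever `u^ε → u`
  (∀ t ∈ Finset.Icc 1 S.T, ∀ x : ℤ, ∀ h : ℤ → ℝ, S.memBV h →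
    (∀ ε ∈ Set.Ioc (0 : ℝ) S.eps0, Continuous fun u : U => S.lamE ε t x u h) ∧
    (∀ (u : U) (uu : ℝ → U), Tendsto uu (nhdsWithin 0 (Set.Ioi 0)) (nhds u) →
      Tendsto (fun ε => S.lamE ε t x (uu ε) h) (nhdsWithin 0 (Set.Ioi 0))
        (nhds (S.lam t x u h)))) ∧
  -- (A3): `limsup_{|x|→∞} sup_{0<ε≤ε₀} Λ^ε_t(x,u;λV)/(λV(x)) < K_u` for `λ ∈ (0,λ₀)`
  (∀ t ∈ Finset.Icc 1 S.T, ∀ u : U, ∃ Ku : ℝ, ∀ lam' ∈ Set.Ioo (0 : ℝ) lam0,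
    ∃ c < Ku, ∀ᶠ x in (Filter.cofinite : Filter ℤ), ∀ ε ∈ Set.Ioc (0 : ℝ) S.eps0,
      S.lamE ε t x u (fun z => lam' * S.V z) ≤ c * (lam' * S.V x))

/-- Assumption (B). -/
def AssumptionB (S : RSSetup U) : Prop :=
  (∀ τ ∈ Finset.Icc 1 S.T, ∀ t ∈ Finset.Icc 1 S.T, ∀ u : U,
    S.memBV fun x => S.f τ t x u) ∧
  (∀ τ ∈ Finset.Icc 1 S.T, S.memBV (S.g τ)) ∧
  (∀ t ∈ Finset.Icc 1 S.T, ∀ x : ℤ, Continuous fun u : U => S.f t t x u) ∧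
  (∀ t ∈ Finset.Icc 1 S.T, ∀ x : ℤ, ∀ K : ℝ, IsCompact {u : U | S.f t t x u ≤ K})

/-- Assumption (C) with parameter `λ₀`: growth conditions over the sublevel sets
`B_{t,λ}(x) = {u : f_{t,t}(x,u) ≤ λ V(x)}`. -/
def AssumptionC (S : RSSetup U) (lam0 : ℝ) : Prop :=
  0 < lam0 ∧ ∃ K1 : ℝ,
    ∀ lam' ∈ Set.Ioo (0 : ℝ) lam0, ∀ τ ∈ Finset.Icc 1 S.T, ∀ t ∈ Finset.Icc 1 S.T,
      (∀ c > K1, ∀ᶠ x in (Filter.cofinite : Filter ℤ), ∀ u : U,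
        S.f t t x u ≤ lam' * S.V x → S.f τ t x u ≤ c * (lam' * S.V x)) ∧
      (∀ c > K1, ∀ᶠ x in (Filter.cofinite : Filter ℤ), ∀ ε ∈ Set.Ioo (0 : ℝ) S.eps0, ∀ u : U,
        S.f t t x u ≤ lam' * S.V x →
          S.lamE ε t x u (fun z => lam' * S.V z) ≤ c * (lam' * S.V x))

/-- The cost `J^ε_{τ,t}(x;π)` of a Markov policy `π`, defined backward from
`J^ε_{τ,T+1} = g_τ`. -/
noncomputable def Jeps (S : RSSetup U) (ε : ℝ) (π : ℕ → ℤ → U) (τ t : ℕ) : ℤ → ℝ :=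
  if h : S.T + 1 ≤ t then S.g τ
  else fun x => S.f τ t x (π t x) + S.lamE ε t x (π t x) (S.Jeps ε π τ (t + 1))
termination_by S.T + 1 - t
decreasing_by omega

/-- The limit cost `J_{τ,t}(x;π)` of a Markov policy `π`, defined backward from
`J_{τ,T+1} = g_τ`. -/
noncomputable def Jlim (S : RSSetup U) (π : ℕ → ℤ → U) (τ t : ℕ) : ℤ → ℝ :=
  if h : S.T + 1 ≤ t then S.g τ
  else fun x => S.f τ t x (π t x) + S.lam t x (π t x) (S.Jlim π τ (t + 1))
termination_by S.T + 1 - t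
decreasing_by omega

/-- `(η, Θ)` solves the `ε`-recursion system. -/
def SolvesEpsSystem (S : RSSetup U) (ε : ℝ) (η : ℕ → ℤ → U) (Θ : ℕ → ℕ → ℤ → ℝ) : Prop :=
  (∀ τ ∈ Finset.Icc 1 S.T, Θ τ (S.T + 1) = S.g τ) ∧
  (∀ t ∈ Finset.Icc 1 S.T, ∀ (x : ℤ) (u : U),
    S.f t t x (η t x) + S.lamE ε t x (η t x) (Θ t (t + 1)) ≤
      S.f t t x u + S.lamE ε t x u (Θ t (t + 1))) ∧
  (∀ τ ∈ Finset.Icc 1 S.T, ∀ t ∈ Finset.Icc 1 S.T, ∀ x : ℤ,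
    Θ τ t x = S.f τ t x (η t x) + S.lamE ε t x (η t x) (Θ τ (t + 1)))

/-- `(η, Θ)` solves the limit recursion system. -/
def SolvesLimSystem (S : RSSetup U) (η : ℕ → ℤ → U) (Θ : ℕ → ℕ → ℤ → ℝ) : Prop :=
  (∀ τ ∈ Finset.Icc 1 S.T, Θ τ (S.T + 1) = S.g τ) ∧
  (∀ t ∈ Finset.Icc 1 S.T, ∀ (x : ℤ) (u : U),
    S.f t t x (η t x) + S.lam t x (η t x) (Θ t (t + 1)) ≤
      S.f t t x u + S.lam t x u (Θ t (t + 1))) ∧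
  (∀ τ ∈ Finset.Icc 1 S.T, ∀ t ∈ Finset.Icc 1 S.T, ∀ x : ℤ,
    Θ τ t x = S.f τ t x (η t x) + S.lam t x (η t x) (Θ τ (t + 1)))

/-- `π` is a time-inconsistent `ε`-risk-sensitive equilibrium. -/
def IsEpsEquilibrium (S : RSSetup U) (ε : ℝ) (π : ℕ → ℤ → U) : Prop :=
  ∀ t ∈ Finset.Icc 1 S.T, ∀ (x : ℤ) (u : U),
    S.Jeps ε π t t x ≤ S.f t t x u + S.lamE ε t x u (S.Jeps ε π t (t + 1))

/-- `π` is a time-inconsistent risk-sensitive equilibrium for the limit cost. -/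
def IsLimEquilibrium (S : RSSetup U) (π : ℕ → ℤ → U) : Prop :=
  ∀ t ∈ Finset.Icc 1 S.T, ∀ (x : ℤ) (u : U),
    S.Jlim π t t x ≤ S.f t t x u + S.lam t x u (S.Jlim π t (t + 1))

end RSSetup

/-!
The functionals `Λ^ε_t(x,u;·)` are monotone on `B_V`, so Assumption (A2), which concerns a fixed
test function, extends to a converging family by sandwiching it between fixed test functions. From
below, a function that is constant except at a near-maximizer of `h - I` suffices. From above, use
`h + δ` on a finite set and `H := sup_ε h^ε` elsewhere: finiteness of `Λ_t(x,u;2H)` and of the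
sublevel sets of `I` makes `H - I` exceed a given level at finitely many points only.
-/

open Asymptotics Set

section SelectionPrinciple

variable {α β γ : Type*}

lemma exists_strictMono_injective_comp {a : ℕ → α} (ha : Tendsto a atTop cofinite) :
    ∃ φ : ℕ → ℕ, StrictMono φ ∧ Function.Injective (a ∘ φ) := by
  obtain ⟨φ, hconst | hdistinct⟩ := exists_increasing_or_nonincreasing_subseq (· = ·) a
  · have hleaves : ∀ᶠ n in atTop, a (φ n) ≠ a (φ 0) :=
      (ha.comp φ.strictMono.tendsto_atTop).eventually (eventually_cofinite_ne _)
    obtain ⟨n, hne, hpos⟩ := (hleaves.and (eventually_gt_atTop 0)).exists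
    exact absurd (hconst 0 n hpos).symm hne
  · exact ⟨φ, φ.strictMono, Function.Injective.of_lt_imp_ne hdistinct⟩

variable [TopologicalSpace β] {u : β}

lemma tendsto_extend_const_cofinite {ι : Type*} {a : ι → α} (ha : Function.Injective a)
    {v : ι → β} (hv : Tendsto v cofinite (𝓝 u)) :
    Tendsto (Function.extend a v fun _ => u) cofinite (𝓝 u) := by
  intro s hs
  have hfin : (a '' {i | v i ∉ s}).Finite := (hv hs).image a
  change ∀ᶠ e in cofinite, Function.extend a v (fun _ => u) e ∈ s
  filter_upwards [hfin.compl_mem_cofinite] with e he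
  by_cases hex : ∃ i, a i = e
  · obtain ⟨i, rfl⟩ := hex
    rw [ha.extend_apply]
    exact not_not.1 fun hi => he ⟨i, hi, rfl⟩
  · rw [Function.extend_apply' _ _ _ hex]
    exact mem_of_mem_nhds hs

-- A subsequence of distinct parameters lets the second coordinates be read as a selection.
lemma tendsto_uncurry_prod_of_forall_selection [FirstCountableTopology β] {f : Filter α}
    [f.IsCountablyGenerated] (hf : f ≤ cofinite) {l : Filter γ} {F : α → β → γ}
    (hF : ∀ w : α → β, Tendsto w f (𝓝 u) → Tendsto (fun e => F e (w e)) f l) :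
    Tendsto (Function.uncurry F) (f ×ˢ 𝓝 u) l := by
  refine tendsto_of_subseq_tendsto fun p hp => ?_
  have hfst : Tendsto (fun n => (p n).1) atTop f := tendsto_fst.comp hp
  have hsnd : Tendsto (fun n => (p n).2) atTop (𝓝 u) := tendsto_snd.comp hp
  obtain ⟨φ, hφ, hinj⟩ := exists_strictMono_injective_comp (hfst.mono_right hf)
  have hsel : Tendsto (Function.extend ((fun n => (p n).1) ∘ φ) (fun n => (p (φ n)).2) fun _ => u)
      f (𝓝 u) := by
    refine (tendsto_extend_const_cofinite hinj ?_).mono_left hf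
    rw [Nat.cofinite_eq_atTop]
    exact hsnd.comp hφ.tendsto_atTop
  refine ⟨φ, ((hF _ hsel).comp (hfst.comp hφ.tendsto_atTop)).congr fun n => ?_⟩
  exact congrArg (F (p (φ n)).1) (hinj.extend_apply _ _ n)

end SelectionPrinciple

section GrowthClass

variable {X : Type*} {V : X → ℝ}

/-- The class `B_V` for an arbitrary weight `V`: functions bounded below that are `o(V)` at infinity
of the discrete space `X`. -/
def lowerBddLittleO (V : X → ℝ) : Set (X → ℝ) :=
  {h | BddBelow (range h) ∧ h =o[cofinite] V}

lemma const_mem_lowerBddLittleO (hV : Tendsto V cofinite atTop) (c : ℝ) :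
    (fun _ => c) ∈ lowerBddLittleO V :=
  ⟨⟨c, forall_mem_range.2 fun _ => le_rfl⟩,
    isLittleO_const_left.2 (Or.inr (tendsto_norm_atTop_atTop.comp hV))⟩

lemma const_mul_mem_lowerBddLittleO {h : X → ℝ} (hh : h ∈ lowerBddLittleO V) {a : ℝ}
    (ha : 0 ≤ a) : (fun z => a * h z) ∈ lowerBddLittleO V := by
  obtain ⟨⟨c, hc⟩, hlittle⟩ := hh
  refine ⟨⟨a * c, forall_mem_range.2 fun z => ?_⟩, hlittle.const_mul_left a⟩
  exact mul_le_mul_of_nonneg_left (hc (mem_range_self z)) ha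

lemma mem_lowerBddLittleO_of_eventuallyEq {g h : X → ℝ} (hh : h ∈ lowerBddLittleO V)
    (hgh : g =ᶠ[cofinite] h) : g ∈ lowerBddLittleO V := by
  have hbdd : BddBelow (range h ∪ g '' {z | g z ≠ h z}) :=
    hh.1.union ((eventually_cofinite.1 hgh).image g).bddBelow
  refine ⟨hbdd.mono (range_subset_iff.2 fun z => ?_), hh.2.congr' hgh.symm .rfl⟩
  by_cases hz : g z = h z
  · exact Or.inl ⟨z, hz.symm⟩
  · exact Or.inr ⟨z, hz, rfl⟩

lemma mem_lowerBddLittleO_of_le_of_le (hV : Tendsto V cofinite atTop) {h H : X → ℝ}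
    (hH : H ∈ lowerBddLittleO V) {c : ℝ} (hc : ∀ z, c ≤ h z) (hhH : h ≤ H) :
    h ∈ lowerBddLittleO V := by
  refine ⟨⟨c, forall_mem_range.2 hc⟩, ?_⟩
  have hdom : (fun z => |H z| + |c|) =o[cofinite] V :=
    hH.2.abs_left.add (const_mem_lowerBddLittleO hV |c|).2
  refine (IsBigO.of_norm_le fun z => ?_).trans_isLittleO hdom
  exact (abs_le_max_abs_abs (hc z) (hhH z)).trans
    (max_le (le_add_of_nonneg_left (abs_nonneg _)) (le_add_of_nonneg_right (abs_nonneg _)))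

end GrowthClass

section LaplacePrinciple

variable {X ι : Type*}

/-- The limit functional `sup_z [h(z) - I(z)]` of Varadhan's lemma for a rate function `I`. The
supremum is real-valued and taken over the points where `I` is finite; it is `0` if `I ≡ ∞` or if
`h - I` is unbounded above. -/
noncomputable def rateSup (I : X → ENNReal) (h : X → ℝ) : ℝ :=
  sSup ((fun z => h z - (I z).toReal) '' {z | I z ≠ ⊤})

/-- The Laplace principle with rate `I` on `B_V`, for functionals `Φ i` which, like scaled
log-moment generating functions, are eventually monotone. -/
structure LaplacePrinciple (l : Filter ι) (Φ : ι → (X → ℝ) → ℝ) (V : X → ℝ)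
    (I : X → ENNReal) : Prop where
  monotoneOn : ∀ᶠ i in l, MonotoneOn (Φ i) (lowerBddLittleO V)
  tendsto : ∀ g ∈ lowerBddLittleO V, Tendsto (fun i => Φ i g) l (𝓝 (rateSup I g))

lemma sub_le_rateSup_update_const [DecidableEq X] (I : X → ENNReal) {z : X} (hz : I z ≠ ⊤)
    (c b : ℝ) : b - (I z).toReal ≤ rateSup I (Function.update (fun _ => c) z b) := by
  have hupdate : ∀ w, Function.update (fun _ => c) z b w ≤ max c b := fun w => by
    rcases eq_or_ne w z with rfl | hw
    · simp
    · simp [hw]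
  refine le_csSup ⟨max c b, ?_⟩ ⟨z, hz, by simp⟩
  rintro _ ⟨w, -, rfl⟩
  exact (sub_le_self _ ENNReal.toReal_nonneg).trans (hupdate w)

namespace LaplacePrinciple

variable {l : Filter ι} {Φ : ι → (X → ℝ) → ℝ} {V : X → ℝ} {I : X → ENNReal}

lemma eventually_lt_of_lt_sub (hL : LaplacePrinciple l Φ V I) (hV : Tendsto V cofinite atTop)
    {h : ι → X → ℝ} (hB : ∀ᶠ i in l, h i ∈ lowerBddLittleO V) {c : ℝ}
    (hc : ∀ᶠ i in l, ∀ z, c ≤ h i z) {z : X} (hz : I z ≠ ⊤) {y : ℝ}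
    (hy : Tendsto (fun i => h i z) l (𝓝 y)) {a : ℝ} (ha : a < y - (I z).toReal) :
    ∀ᶠ i in l, a < Φ i (h i) := by
  classical
  obtain ⟨b, hab, hby⟩ := exists_between (lt_sub_iff_add_lt.1 ha)
  let k : X → ℝ := Function.update (fun _ => c) z b
  have hk : k ∈ lowerBddLittleO V := by
    refine mem_lowerBddLittleO_of_eventuallyEq (const_mem_lowerBddLittleO hV c) ?_
    filter_upwards [eventually_cofinite_ne z] with w hw using Function.update_of_ne hw _ _
  have hak : a < rateSup I k :=
    (lt_sub_iff_add_lt.2 hab).trans_le (sub_le_rateSup_update_const I hz c b)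
  filter_upwards [hL.monotoneOn, hB, hc, hy.eventually_const_lt hby,
    (hL.tendsto k hk).eventually_const_lt hak] with i hmono hBi hci hbi hai
  exact hai.trans_le (hmono hk hBi (update_le_iff.2 ⟨hbi.le, fun w _ => hci w⟩))

variable [l.NeBot]

-- `rateSup I g` is no junk value: the finite limit of `Φ i g` bounds `g - I` pointwise.
lemma sub_le_rateSup (hL : LaplacePrinciple l Φ V I) (hV : Tendsto V cofinite atTop)
    {g : X → ℝ} (hg : g ∈ lowerBddLittleO V) {z : X} (hz : I z ≠ ⊤) :
    g z - (I z).toReal ≤ rateSup I g := by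
  obtain ⟨c, hc⟩ := hg.1
  refine le_of_forall_lt_imp_le_of_dense fun a ha => ?_
  have hlt : ∀ᶠ i in l, a < Φ i g :=
    hL.eventually_lt_of_lt_sub hV (Eventually.of_forall fun _ => hg)
      (Eventually.of_forall fun _ z => hc (mem_range_self z)) hz tendsto_const_nhds ha
  exact ge_of_tendsto (hL.tendsto g hg) (hlt.mono fun _ => le_of_lt)

lemma exists_ne_top (hL : LaplacePrinciple l Φ V I) (hV : Tendsto V cofinite atTop)
    (hone : ∀ᶠ i in l, Φ i (fun _ => 1) = 1) : ∃ z, I z ≠ ⊤ := by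
  by_contra! htop
  have hzero : rateSup I (fun _ => 1) = 0 := by simp [rateSup, htop]
  have hlim := hL.tendsto _ (const_mem_lowerBddLittleO hV 1)
  rw [hzero] at hlim
  exact zero_ne_one
    (tendsto_nhds_unique hlim (tendsto_const_nhds.congr' (hone.mono fun _ => .symm)))

-- `2 * H - I ≤ C` gives `H - I ≤ (C - I) / 2`.
lemma finite_lt_sub (hL : LaplacePrinciple l Φ V I) (hV : Tendsto V cofinite atTop)
    (hI : ∀ K : ENNReal, K ≠ ⊤ → {z | I z ≤ K}.Finite) {H : X → ℝ}
    (hH : H ∈ lowerBddLittleO V) (M : ℝ) :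
    {z | I z ≠ ⊤ ∧ M < H z - (I z).toReal}.Finite := by
  set C := rateSup I fun z => 2 * H z
  refine (hI (ENNReal.ofReal (C - 2 * M)) ENNReal.ofReal_ne_top).subset ?_
  rintro z ⟨hz, hM⟩
  have hC : 2 * H z - (I z).toReal ≤ C :=
    hL.sub_le_rateSup hV (const_mul_mem_lowerBddLittleO hH zero_le_two) hz
  exact (ENNReal.le_ofReal_iff_toReal_le hz (by linarith [(I z).toReal_nonneg])).2 (by linarith)

lemma exists_finite_rateSup_piecewise_le (hL : LaplacePrinciple l Φ V I)
    (hV : Tendsto V cofinite atTop) (hI : ∀ K : ENNReal, K ≠ ⊤ → {z | I z ≤ K}.Finite)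
    (hne : ∃ z, I z ≠ ⊤) {h H : X → ℝ} (hh : h ∈ lowerBddLittleO V)
    (hH : H ∈ lowerBddLittleO V) {δ : ℝ} (hδ : 0 ≤ δ) :
    ∃ E : Set X, E.Finite ∧ ∀ [DecidablePred (· ∈ E)],
      rateSup I (E.piecewise (fun z => h z + δ) H) ≤ rateSup I h + δ := by
  refine ⟨_, hL.finite_lt_sub hV hI hH (rateSup I h), csSup_le (Set.Nonempty.image _ hne) ?_⟩
  rintro _ ⟨z, hz, rfl⟩
  dsimp only
  by_cases hzE : z ∈ {z | I z ≠ ⊤ ∧ rateSup I h < H z - (I z).toReal}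
  · rw [piecewise_eq_of_mem _ _ _ hzE]
    linarith [hL.sub_le_rateSup hV hh hz]
  · rw [piecewise_eq_of_notMem _ _ _ hzE]
    have hle : H z - (I z).toReal ≤ rateSup I h := not_lt.1 fun hlt => hzE ⟨hz, hlt⟩
    linarith

lemma eventually_lt_of_rateSup_lt (hL : LaplacePrinciple l Φ V I) (hV : Tendsto V cofinite atTop)
    (hI : ∀ K : ENNReal, K ≠ ⊤ → {z | I z ≤ K}.Finite) (hne : ∃ z, I z ≠ ⊤)
    {h : ι → X → ℝ} {h₀ H : X → ℝ} (hB : ∀ᶠ i in l, h i ∈ lowerBddLittleO V)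
    (hh₀ : h₀ ∈ lowerBddLittleO V) (hH : H ∈ lowerBddLittleO V) (hhH : ∀ᶠ i in l, h i ≤ H)
    (hlim : ∀ z, Tendsto (fun i => h i z) l (𝓝 (h₀ z))) {a : ℝ} (ha : rateSup I h₀ < a) :
    ∀ᶠ i in l, Φ i (h i) < a := by
  classical
  obtain ⟨δ, hδ, hδa⟩ := exists_between (sub_pos.2 ha)
  obtain ⟨E, hE, hEle⟩ := hL.exists_finite_rateSup_piecewise_le hV hI hne hh₀ hH hδ.le
  let g : X → ℝ := E.piecewise (fun z => h₀ z + δ) H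
  have hg : g ∈ lowerBddLittleO V := by
    refine mem_lowerBddLittleO_of_eventuallyEq hH ?_
    filter_upwards [hE.compl_mem_cofinite] with z hz using piecewise_eq_of_notMem _ _ _ hz
  have hga : rateSup I g < a := hEle.trans_lt (lt_sub_iff_add_lt'.1 hδa)
  have hnear : ∀ᶠ i in l, ∀ z ∈ E, h i z < h₀ z + δ :=
    (eventually_all_finite hE).2 fun z _ =>
      (hlim z).eventually_lt_const (lt_add_of_pos_right _ hδ)
  filter_upwards [hL.monotoneOn, hB, hhH, hnear, (hL.tendsto g hg).eventually_lt_const hga]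
    with i hmono hBi hHi hEi hai
  exact (hmono hBi hg (le_piecewise (fun z hz => (hEi z hz).le) fun z _ => hHi z)).trans_lt hai

theorem tendsto_of_tendsto_pointwise (hL : LaplacePrinciple l Φ V I)
    (hV : Tendsto V cofinite atTop) (hI : ∀ K : ENNReal, K ≠ ⊤ → {z | I z ≤ K}.Finite)
    (hne : ∃ z, I z ≠ ⊤) {h : ι → X → ℝ} {h₀ H : X → ℝ} {c : ℝ}
    (hc : ∀ᶠ i in l, ∀ z, c ≤ h i z) (hhH : ∀ᶠ i in l, h i ≤ H) (hH : H ∈ lowerBddLittleO V)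
    (hlim : ∀ z, Tendsto (fun i => h i z) l (𝓝 (h₀ z))) :
    Tendsto (fun i => Φ i (h i)) l (𝓝 (rateSup I h₀)) := by
  have hB : ∀ᶠ i in l, h i ∈ lowerBddLittleO V := by
    filter_upwards [hc, hhH] with i hci hHi using mem_lowerBddLittleO_of_le_of_le hV hH hci hHi
  have hh₀ : h₀ ∈ lowerBddLittleO V :=
    mem_lowerBddLittleO_of_le_of_le hV hH
      (fun z => ge_of_tendsto (hlim z) (hc.mono fun _ hci => hci z))
      (fun z => le_of_tendsto (hlim z) (hhH.mono fun _ hHi => hHi z))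
  refine tendsto_order.2 ⟨fun a ha => ?_, fun a ha =>
    hL.eventually_lt_of_rateSup_lt hV hI hne hB hh₀ hH hhH hlim ha⟩
  obtain ⟨_, ⟨z, hz, rfl⟩, haz⟩ := exists_lt_of_lt_csSup (Set.Nonempty.image _ hne) ha
  exact hL.eventually_lt_of_lt_sub hV hB hc hz (hlim z) haz

end LaplacePrinciple

end LaplacePrinciple

section LogMoment

variable {X : Type*} {p : X → ℝ} {ε : ℝ}

lemma summable_exp_div_mul_of_isLittleO {V g : X → ℝ} (hV : Tendsto V cofinite atTop)
    (hp : ∀ z, 0 ≤ p z) (hε : 0 < ε) {r : ℝ} (hr : 0 < r)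
    (hsum : Summable fun z => Real.exp (r * V z / ε) * p z) (hg : g =o[cofinite] V) :
    Summable fun z => Real.exp (g z / ε) * p z := by
  refine hsum.of_norm_bounded_eventually ?_
  filter_upwards [hg.bound hr, hV.eventually_ge_atTop 0] with z hgz hVz
  have hgV : g z ≤ r * V z := by
    rw [Real.norm_of_nonneg hVz] at hgz
    exact (le_abs_self _).trans hgz
  rw [Real.norm_of_nonneg (mul_nonneg (Real.exp_nonneg _) (hp z))]
  exact mul_le_mul_of_nonneg_right
    (Real.exp_le_exp.2 (div_le_div_of_nonneg_right hgV hε.le)) (hp z)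

lemma mul_log_tsum_exp_div_mul_le (hp : ∀ z, 0 ≤ p z) (hp₀ : p ≠ 0) (hε : 0 < ε) {k g : X → ℝ}
    (hkg : k ≤ g) (hg : Summable fun z => Real.exp (g z / ε) * p z) :
    ε * Real.log (∑' z, Real.exp (k z / ε) * p z) ≤
      ε * Real.log (∑' z, Real.exp (g z / ε) * p z) := by
  have hnonneg : ∀ z, 0 ≤ Real.exp (k z / ε) * p z := fun z =>
    mul_nonneg (Real.exp_nonneg _) (hp z)
  have hle : ∀ z, Real.exp (k z / ε) * p z ≤ Real.exp (g z / ε) * p z := fun z =>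
    mul_le_mul_of_nonneg_right
      (Real.exp_le_exp.2 (div_le_div_of_nonneg_right (hkg z) hε.le)) (hp z)
  have hk : Summable fun z => Real.exp (k z / ε) * p z := hg.of_nonneg_of_le hnonneg hle
  obtain ⟨z, hz⟩ := Function.ne_iff.1 hp₀
  have hpos : 0 < ∑' z, Real.exp (k z / ε) * p z :=
    hk.tsum_pos hnonneg z (mul_pos (Real.exp_pos _) ((hp z).lt_of_ne' hz))
  exact mul_le_mul_of_nonneg_left (Real.log_le_log hpos (hk.tsum_le_tsum hle hg)) hε.le

end LogMoment

namespace RSSetup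

variable {U : Type*} [MetricSpace U] (S : RSSetup U)

lemma tendsto_V_cofinite_atTop : Tendsto S.V cofinite atTop :=
  tendsto_atTop.2 fun K => eventually_cofinite.2 <|
    (S.V_infFinite K).subset fun _ hx => (not_le.1 hx).le

lemma memBV_iff_mem_lowerBddLittleO {h : ℤ → ℝ} : S.memBV h ↔ h ∈ lowerBddLittleO S.V := by
  refine and_congr_right fun _ => ?_
  rw [← isLittleO_abs_left, isLittleO_iff_tendsto fun x hx => absurd hx (S.V_pos x).ne']

variable {t : ℕ} {x : ℤ} {ε : ℝ} {u : U}

lemma lamE_const (ht : t ∈ Finset.Icc 1 S.T) (hε : ε ∈ Ioc 0 S.eps0) (c : ℝ) :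
    S.lamE ε t x u (fun _ => c) = c := by
  rw [lamE, tsum_mul_left, (S.q_pmf ε hε t ht x u).tsum_eq, mul_one, Real.log_exp,
    mul_div_cancel₀ _ hε.1.ne']

lemma monotoneOn_lamE (ht : t ∈ Finset.Icc 1 S.T) (hε : ε ∈ Ioc 0 S.eps0) {lam0 : ℝ}
    (hlam0 : 0 < lam0)
    (hsum : Summable fun z => Real.exp (lam0 * S.V z / ε) * S.q ε t x u z) :
    MonotoneOn (S.lamE ε t x u) (lowerBddLittleO S.V) := by
  intro k _ g hg hkg
  have hq := S.q_nonneg ε hε t ht x u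
  have hq₀ : S.q ε t x u ≠ 0 := fun hzero =>
    zero_ne_one (hasSum_zero.unique (hzero ▸ S.q_pmf ε hε t ht x u))
  exact mul_log_tsum_exp_div_mul_le hq hq₀ hε.1 hkg
    (summable_exp_div_mul_of_isLittleO S.tendsto_V_cofinite_atTop hq hε.1 hlam0 hsum hg.2)

end RSSetup

theorem statement12_general {U : Type*} [MetricSpace U] (S : RSSetup U) {t : ℕ}
    (ht : t ∈ Finset.Icc 1 S.T) {x : ℤ} {u : U} {lam0 : ℝ} (hlam0 : 0 < lam0)
    (hsum : ∀ v : U, ∀ ε ∈ Ioc 0 S.eps0,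
      Summable fun z => Real.exp (lam0 * S.V z / ε) * S.q ε t x v z)
    (hlaplace : ∀ g, S.memBV g → ∀ w : ℝ → U, Tendsto w (𝓝[>] 0) (𝓝 u) →
      Tendsto (fun ε => S.lamE ε t x (w ε) g) (𝓝[>] 0) (𝓝 (S.lam t x u g)))
    {hfam : ℝ → ℤ → ℝ} (hmem : S.memFam hfam) {h : ℤ → ℝ}
    (hptw : ∀ z, Tendsto (fun ε => hfam ε z) (𝓝[>] 0) (𝓝 (h z))) :
    Tendsto (fun p : ℝ × U => S.lamE p.1 t x p.2 (hfam p.1)) (𝓝[>] 0 ×ˢ 𝓝 u)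
      (𝓝 (S.lam t x u h)) := by
  obtain ⟨-, ⟨c, hc⟩, hbdd, hsup⟩ := hmem
  have hV := S.tendsto_V_cofinite_atTop
  have hε : ∀ᶠ p : ℝ × U in 𝓝[>] 0 ×ˢ 𝓝 u, p.1 ∈ Ioc 0 S.eps0 :=
    tendsto_fst.eventually (Ioc_mem_nhdsGT S.eps0_pos)
  have hL : LaplacePrinciple (𝓝[>] 0 ×ˢ 𝓝 u) (fun p : ℝ × U => S.lamE p.1 t x p.2) S.V
      (S.I t x u) :=
    { monotoneOn := hε.mono fun p hp => S.monotoneOn_lamE ht hp hlam0 (hsum p.2 p.1 hp)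
      tendsto := fun g hg => tendsto_uncurry_prod_of_forall_selection
        (F := fun ε v => S.lamE ε t x v g)
        ((nhdsGT_le_nhdsNE 0).trans (nhdsNE_le_cofinite 0))
        (hlaplace g (S.memBV_iff_mem_lowerBddLittleO.2 hg)) }
  exact hL.tendsto_of_tendsto_pointwise hV (S.I_subfin t x u)
    (hL.exists_ne_top hV (hε.mono fun p hp => S.lamE_const ht hp 1))
    (hε.mono fun p hp => hc p.1 hp) (hε.mono fun p hp z => le_csSup (hbdd z) ⟨p.1, hp, rfl⟩)
    (S.memBV_iff_mem_lowerBddLittleO.1 hsup) (fun z => (hptw z).comp tendsto_fst)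

/-- Under Assumption (A): if `{h^ε} ∈ 𝓑_V` and `h^ε → h` pointwise as
`ε → 0⁺`, then for each `t` and `x`, `Λ^ε_t(x,u;h^ε) → Λ_t(x,u;h)` uniformly in `u` on compact
subsets of `U`; in sequential form: for every `ε_n → 0⁺` in `(0,ε₀]` and every `u_n → u`,
`Λ^{ε_n}_t(x,u_n;h^{ε_n}) → Λ_t(x,u;h)`. -/
theorem statement12 {U : Type*} [MetricSpace U] [CompleteSpace U]
    (S : RSSetup U) (lam0 : ℝ) (hA : S.AssumptionA lam0)
    (hfam : ℝ → ℤ → ℝ) (hmem : S.memFam hfam)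
    (h : ℤ → ℝ)
    (hptw : ∀ x : ℤ, Filter.Tendsto (fun ε => hfam ε x)
      (nhdsWithin 0 (Set.Ioi 0)) (nhds (h x)))
    (t : ℕ) (ht : t ∈ Finset.Icc 1 S.T) (x : ℤ) :
    ∀ εs : ℕ → ℝ, (∀ n, εs n ∈ Set.Ioc (0 : ℝ) S.eps0) →
      Filter.Tendsto εs Filter.atTop (nhds 0) →
      ∀ (us : ℕ → U) (u : U), Filter.Tendsto us Filter.atTop (nhds u) →
        Filter.Tendsto (fun n => S.lamE (εs n) t x (us n) (hfam (εs n)))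
          Filter.atTop (nhds (S.lam t x u h)) := by
  intro εs hεs hε us u hu
  exact (statement12_general S ht hA.1 (fun v => (hA.2.1 t ht x v).1)
    (fun g hg => (hA.2.2.1 t ht x g hg).2 u) hmem hptw).comp
    ((tendsto_nhdsWithin_iff.2 ⟨hε, .of_forall fun n => (hεs n).1⟩).prodMk hu)
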